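/- arXiv:1809.04146 — 4 statements merged into one kernel-verified Lean document; each statement's English description precedes it below -/
import Mathlib

section
/- Let 1 ≤ b ≤ n and let S be the b-nice sampling over [n], i.e. S is chosen uniformly at random among all subsets of [n] of cardinality b. Then its probability matrix P satisfies P_{ii} = b/n for all i and P_{ij} = b(b−1)/(n(n−1)) for all i ≠ j, and the ESO condition for S holds with the constant choice v_i = (n−b)/(n−1) for all i. -/
open scoped BigOperators

/-!
A set of size `t` lies in a uniformly random `b`-subset of an `n`-set with probability
`b.choose t / n.choose t`; the cases `t = 1, 2` give the entries of `P`. With these values all the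
entries of `Diag(p v) - (P - p pᵀ)`, diagonal or not, equal `b (n - b) / (n² (n - 1)) ≥ 0`, so this
matrix is a nonnegative multiple of `1 1ᵀ`.
-/

open Finset Matrix

section Sampling

variable {α K : Type*} [Fintype α] [DecidableEq α]

/-- The probability vector `i ↦ Prob(i ∈ S)` of a sampling over `α`. Samplings are encoded by their
weights: `w S` is the probability of drawing `S`. -/
def probVector [AddCommMonoid K] (w : Finset α → K) (i : α) : K :=
  ∑ S with i ∈ S, w S

/-- The probability matrix `(i, j) ↦ Prob({i, j} ⊆ S)` of a sampling with weights `w`. -/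
def probMatrix [AddCommMonoid K] (w : Finset α → K) : Matrix α α K :=
  of fun i j => ∑ S with i ∈ S ∧ j ∈ S, w S

/-- The ESO condition `P - p pᵀ ⪯ Diag(p v)` for a sampling with weights `w`, where the Loewner
order is expressed by positive semidefiniteness of the difference. -/
def SatisfiesESO [Ring K] [PartialOrder K] [StarRing K] (w : Finset α → K) (v : α → K) : Prop :=
  (diagonal (fun i => probVector w i * v i) -
    (probMatrix w - vecMulVec (probVector w) (probVector w))).PosSemidef

lemma probMatrix_apply_self [AddCommMonoid K] (w : Finset α → K) (i : α) :
    probMatrix w i i = probVector w i := by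
  simp only [probMatrix, probVector, of_apply, and_self]

lemma satisfiesESO_const [CommRing K] [PartialOrder K] [StarRing K] [StarOrderedRing K]
    {w : Finset α → K} {q v : K} (hdiag : ∀ i, probMatrix w i i = q)
    (hoff : ∀ i j, i ≠ j → probMatrix w i j = q * (1 - v)) (hnonneg : 0 ≤ q * (q + v - 1)) :
    SatisfiesESO w fun _ => v := by
  have hp (i : α) : probVector w i = q := (probMatrix_apply_self w i).symm.trans (hdiag i)
  have hmatrix : diagonal (fun i => probVector w i * v) -
      (probMatrix w - vecMulVec (probVector w) (probVector w)) =
        (q * (q + v - 1)) • vecMulVec (1 : α → K) (star 1) := by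
    ext i j
    obtain rfl | hij := eq_or_ne i j
    · simp only [Matrix.sub_apply, diagonal_apply_eq, vecMulVec_apply, Matrix.smul_apply, hp, hdiag,
        star_one, Pi.one_apply, smul_eq_mul]
      ring
    · simp only [Matrix.sub_apply, diagonal_apply_ne _ hij, vecMulVec_apply, Matrix.smul_apply, hp,
        hoff i j hij, star_one, Pi.one_apply, smul_eq_mul]
      ring
  rw [SatisfiesESO, hmatrix]
  exact (posSemidef_vecMulVec_self_star _).smul hnonneg

end Sampling

section NiceSampling

lemma card_filter_powersetCard_superset_mul_choose {α : Type*} [DecidableEq α] {s T : Finset α}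
    (hTs : T ⊆ s) (b : ℕ) :
    #{S ∈ powersetCard b s | T ⊆ S} * (#s).choose #T = b.choose #T * (#s).choose b := by
  obtain hT | hT := le_or_gt #T b
  · rw [card_filter_powersetCard_subset T s b hTs hT, mul_comm, mul_comm (b.choose _),
      Nat.choose_mul hT]
  · have hempty : {S ∈ powersetCard b s | T ⊆ S} = ∅ :=
      filter_eq_empty_iff.2 fun S hS hTS =>
        (card_le_card hTS).not_gt ((mem_powersetCard.1 hS).2 ▸ hT)
    rw [hempty, card_empty, Nat.choose_eq_zero_of_lt hT, zero_mul, zero_mul]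

variable (K α : Type*) [Fintype α]

/-- The weights of the `b`-nice sampling over `α`, which draws a uniformly random subset of
cardinality `b`. For `b > Fintype.card α` no such subset exists and all weights vanish. -/
def niceSampling [DivisionRing K] (b : ℕ) (S : Finset α) : K :=
  if #S = b then ((Fintype.card α).choose b : K)⁻¹ else 0

variable {α} [DecidableEq α] {b : ℕ}

lemma sum_superset_niceSampling [Field K] [CharZero K] (hb : b ≤ Fintype.card α) (T : Finset α) :
    ∑ S with T ⊆ S, niceSampling K α b S = (b.choose #T : K) / (Fintype.card α).choose #T := by
  have hchoose {k : ℕ} (hk : k ≤ Fintype.card α) : ((Fintype.card α).choose k : K) ≠ 0 :=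
    Nat.cast_ne_zero.2 (Nat.choose_ne_zero hk)
  have hfilter : ({S | T ⊆ S} : Finset (Finset α)).filter (fun S => #S = b) =
      {S ∈ powersetCard b (univ : Finset α) | T ⊆ S} := by
    ext S
    simp [and_comm]
  simp only [niceSampling]
  rw [← sum_filter, hfilter, sum_const, nsmul_eq_mul, ← div_eq_mul_inv,
    div_eq_div_iff (hchoose hb) (hchoose (card_le_univ T))]
  exact_mod_cast card_filter_powersetCard_superset_mul_choose (subset_univ T) b

lemma probMatrix_niceSampling_apply_self [Field K] [CharZero K] (hb : b ≤ Fintype.card α)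
    (i : α) : probMatrix (niceSampling K α b) i i = (b : K) / Fintype.card α := by
  simpa [probMatrix] using sum_superset_niceSampling K hb {i}

lemma probMatrix_niceSampling_apply_of_ne [Field K] [CharZero K] (hb : b ≤ Fintype.card α)
    {i j : α} (hij : i ≠ j) :
    probMatrix (niceSampling K α b) i j =
      ((b : K) * (b - 1)) / (Fintype.card α * (Fintype.card α - 1)) := by
  have hpair := sum_superset_niceSampling K hb {i, j}
  simp only [insert_subset_iff, singleton_subset_iff, card_pair hij, Nat.cast_choose_two,
    div_div_div_cancel_right₀ (two_ne_zero' K)] at hpair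
  exact hpair

variable [Field K] [LinearOrder K] [StarRing K] [StarOrderedRing K]

lemma satisfiesESO_niceSampling (hb : b ≤ Fintype.card α) :
    SatisfiesESO (niceSampling K α b)
      fun _ => ((Fintype.card α : K) - b) / (Fintype.card α - 1) := by
  refine satisfiesESO_const (probMatrix_niceSampling_apply_self K hb) (fun i j hij => ?_) ?_
  · have hcard : (Fintype.card α : K) - 1 ≠ 0 :=
      sub_ne_zero.2 (Nat.cast_ne_one.2 (Fintype.one_lt_card_iff.2 ⟨i, j, hij⟩).ne')
    rw [probMatrix_niceSampling_apply_of_ne K hb hij, one_sub_div hcard, div_mul_div_comm]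
    ring
  · generalize Fintype.card α = n at hb ⊢
    obtain hn | hn := le_or_gt n 1
    · -- For `n = 1` the division by `n - 1` gives `0`, so the claim reads `0 ≤ 0`.
      interval_cases n <;> interval_cases b <;> simp
    · have one_lt_n : (1 : K) < n := Nat.one_lt_cast.2 hn
      have n_sub_one_pos : (0 : K) < n - 1 := sub_pos.2 one_lt_n
      have n_sub_b_nonneg : (0 : K) ≤ n - b := sub_nonneg.2 (Nat.cast_le.2 hb)
      have n_pos : (0 : K) < n := zero_lt_one.trans one_lt_n
      have hfactor : (b : K) / n * (b / n + (n - b) / (n - 1) - 1) =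
          b * (n - b) / (n ^ 2 * (n - 1)) := by
        field_simp [n_pos.ne', n_sub_one_pos.ne']
        ring
      rw [hfactor]
      exact div_nonneg (mul_nonneg b.cast_nonneg n_sub_b_nonneg)
        (mul_nonneg (sq_nonneg _) n_sub_one_pos.le)

theorem b_nice_sampling_probability_matrix_and_eso_general (hb : b ≤ Fintype.card α) :
    (∀ i, probMatrix (niceSampling K α b) i i = (b : K) / Fintype.card α) ∧
    (∀ i j, i ≠ j → probMatrix (niceSampling K α b) i j =
      ((b : K) * (b - 1)) / (Fintype.card α * (Fintype.card α - 1))) ∧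
    SatisfiesESO (niceSampling K α b)
      fun _ => ((Fintype.card α : K) - b) / (Fintype.card α - 1) :=
  ⟨probMatrix_niceSampling_apply_self K hb,
    fun _ _ => probMatrix_niceSampling_apply_of_ne K hb, satisfiesESO_niceSampling K hb⟩

end NiceSampling

/-- For the `b`-nice sampling (uniform over subsets of cardinality `b`), the
probability matrix has entries `b/n` on the diagonal and `b(b-1)/(n(n-1))` off
the diagonal, and the ESO condition holds with `v i = (n-b)/(n-1)`. -/
theorem b_nice_sampling_probability_matrix_and_eso {n : ℕ} (b : ℕ)
    (hb1 : 1 ≤ b) (hbn : b ≤ n)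
    (w : Finset (Fin n) → ℝ)
    (hw : ∀ S : Finset (Fin n), w S = if S.card = b then ((n.choose b : ℝ))⁻¹ else 0)
    (p : Fin n → ℝ)
    (hp : ∀ i, p i = ∑ S ∈ Finset.univ.filter (fun S : Finset (Fin n) => i ∈ S), w S)
    (P : Matrix (Fin n) (Fin n) ℝ)
    (hP : ∀ i j, P i j =
      ∑ S ∈ Finset.univ.filter (fun S : Finset (Fin n) => i ∈ S ∧ j ∈ S), w S) :
    (∀ i, P i i = (b : ℝ) / n) ∧
    (∀ i j, i ≠ j → P i j = ((b : ℝ) * ((b : ℝ) - 1)) / ((n : ℝ) * ((n : ℝ) - 1))) ∧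
    (Matrix.diagonal (fun i => p i * (((n : ℝ) - b) / ((n : ℝ) - 1))) -
      (P - Matrix.of fun i j => p i * p j)).PosSemidef := by
  obtain rfl : w = niceSampling ℝ (Fin n) b := by
    ext S
    rw [hw, niceSampling, Fintype.card_fin]
  obtain rfl : p = probVector (niceSampling ℝ (Fin n) b) := funext hp
  obtain rfl : P = probMatrix (niceSampling ℝ (Fin n) b) := Matrix.ext hP
  have hcard : b ≤ Fintype.card (Fin n) := hbn.trans_eq (Fintype.card_fin n).symm
  have hgeneral := b_nice_sampling_probability_matrix_and_eso_general ℝ hcard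
  rwa [Fintype.card_fin] at hgeneral
end

section
/- Let 1 ≤ k ≤ n, p_1,…,p_k ∈ (0,1), p_{k+1} = ⋯ = p_n = 1, and let 1 ≤ a ≤ k be an integer with k·p_i ≤ a for all i ≤ k. Consider the approximate independent sampling S^a: first draw a subset S' of [k] of cardinality a uniformly at random, then include each i ∈ S' independently with probability k p_i / a, and finally add all indices i > k; let S be the resulting random subset of [n]. Then Prob(i ∈ S) = p_i for every i, Prob({i,j} ⊆ S) = ((a−1)k/(a(k−1))) p_i p_j for all i ≠ j with i,j ≤ k, and, setting s = (k−a)/(a(k−1)), the ESO condition for S holds with v_i = 1 − p_i(1 − s) for i ≤ k and v_i = 0 for i > k. -/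
/-!
Conditionally on the first-stage set `S'`, the sampling is independent, with marginals `r i` on
`S'`, `0` on the rest of the block `K` and `1` outside `K`. Hence it contains `J` with conditional
probability `∏ i ∈ J ∩ K, r i` if `J ∩ K ⊆ S'` and `0` otherwise. Averaging over the uniform
`a`-subset `S'` of `K` multiplies `∏ i ∈ J ∩ K, r i` by the probability
`choose a m / choose |K| m` of `J ∩ K ⊆ S'`, where `m = |J ∩ K|`.

For `r i = |K| p i / a`, the cases `m ≤ 2` show that the covariance of the events `i ∈ S` and
`j ∈ S` is `-s q i q j` for `i ≠ j`, where `q` is `p` restricted to `K`. The matrix in the ESO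
condition is then exactly `s q qᵀ`, which is positive semidefinite because `s ≥ 0`.
-/

open scoped BigOperators

open Finset

section Sampling

variable {ι R : Type*} [Fintype ι] [DecidableEq ι]

/-- The probability that a sampling contains `J`. A sampling is encoded by its weights
`w T = Prob(S = T)`, which are not required to be nonnegative or to sum to one. -/
def inclusionProb [AddCommMonoid R] (w : Finset ι → R) (J : Finset ι) : R :=
  ∑ T with J ⊆ T, w T

/-- The probability matrix `P i j = Prob({i, j} ⊆ S)` of a sampling with weights `w`. -/
def probabilityMatrix [AddCommMonoid R] (w : Finset ι → R) : Matrix ι ι R :=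
  Matrix.of fun i j => inclusionProb w {i, j}

lemma probabilityMatrix_apply [AddCommMonoid R] (w : Finset ι → R) (i j : ι) :
    probabilityMatrix w i j = ∑ T with i ∈ T ∧ j ∈ T, w T := by
  simp [probabilityMatrix, inclusionProb, insert_subset_iff]

variable [CommRing R]

/-- The weights of the independent sampling, which contains each `i` with probability `x i`. -/
def independentSampling (x : ι → R) (T : Finset ι) : R :=
  ∏ i, if i ∈ T then x i else 1 - x i

lemma inclusionProb_independentSampling (x : ι → R) (J : Finset ι) :
    inclusionProb (independentSampling x) J = ∏ i ∈ J, x i := by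
  -- Assigning the factor `0` to the omission of an element of `J` turns the restricted sum over
  -- `T ⊇ J` into a sum over all `T`, which is an expanded product of binomials.
  have restrict (T : Finset ι) : (if J ⊆ T then independentSampling x T else 0) =
      ∏ i, if i ∈ T then x i else if i ∈ J then 0 else 1 - x i := by
    split_ifs with hJT
    · exact prod_congr rfl fun i _ => by grind
    · obtain ⟨i, hiJ, hiT⟩ := not_subset.mp hJT
      exact (prod_eq_zero (mem_univ i) (by simp [hiJ, hiT])).symm
  calc inclusionProb (independentSampling x) J
      = ∑ T : Finset ι, ∏ i, if i ∈ T then x i else if i ∈ J then 0 else 1 - x i := by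
        simp only [inclusionProb, sum_filter, restrict]
    _ = ∏ i, (x i + if i ∈ J then 0 else 1 - x i) := by
        rw [prod_add, powerset_univ]
        refine sum_congr rfl fun T _ => ?_
        rw [prod_ite, filter_mem_eq_inter, univ_inter, filter_notMem_eq_sdiff]
    _ = ∏ i, if i ∈ J then x i else 1 :=
        prod_congr rfl fun i _ => by split_ifs <;> ring
    _ = ∏ i ∈ J, x i := by rw [prod_ite_mem, univ_inter]

end Sampling

section ConditionalMarginal

variable {ι R : Type*} [DecidableEq ι]

/-- The conditional probability that approximate independent sampling on the block `K` contains
`i`, given that its first stage has drawn `S`, each element of which is kept with probability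
`r i`. -/
def conditionalMarginal [Zero R] [One R] (K S : Finset ι) (r : ι → R) (i : ι) : R :=
  if i ∈ K then (if i ∈ S then r i else 0) else 1

lemma prod_conditionalMarginal [CommMonoidWithZero R] (K S J : Finset ι) (r : ι → R) :
    ∏ i ∈ J, conditionalMarginal K S r i = if J ∩ K ⊆ S then ∏ i ∈ J ∩ K, r i else 0 := by
  simp only [conditionalMarginal, prod_ite_mem, prod_ite_zero, subset_iff]

lemma independentSampling_conditionalMarginal [Fintype ι] [CommRing R] {K S : Finset ι}
    (hSK : S ⊆ K) (r : ι → R) (T : Finset ι) :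
    independentSampling (conditionalMarginal K S r) T =
      if (∀ i ∉ K, i ∈ T) ∧ T ∩ K ⊆ S then ∏ i ∈ S, if i ∈ T then r i else 1 - r i else 0 := by
  unfold independentSampling conditionalMarginal
  split_ifs with h
  · obtain ⟨hKT, hTS⟩ := h
    rw [← prod_subset (subset_univ S)]
    · exact prod_congr rfl fun i hi => by simp [hi, hSK hi]
    · intro i _ hiS
      grind
  · obtain ⟨i, hiK, hiT⟩ | ⟨i, hiTK, hiS⟩ : (∃ i ∉ K, i ∉ T) ∨ ∃ i ∈ T ∩ K, i ∉ S := by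
      rw [not_and_or, not_subset] at h
      simpa only [not_forall, exists_prop] using h
    · exact prod_eq_zero (mem_univ i) (by simp [hiK, hiT])
    · obtain ⟨hiT, hiK⟩ := mem_inter.mp hiTK
      exact prod_eq_zero (mem_univ i) (by simp [hiT, hiK, hiS])

end ConditionalMarginal

lemma card_filter_superset_powersetCard_mul_choose {ι : Type*} [DecidableEq ι] {J K : Finset ι}
    (hJK : J ⊆ K) (a : ℕ) :
    #{S ∈ K.powersetCard a | J ⊆ S} * (#K).choose #J = (#K).choose a * a.choose #J := by
  obtain hJa | haJ := le_or_gt #J a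
  · rw [card_filter_powersetCard_subset J K a hJK hJa, Nat.choose_mul hJa, mul_comm]
  · have no_superset : {S ∈ K.powersetCard a | J ⊆ S} = ∅ :=
      filter_eq_empty_iff.mpr fun S hS hJS =>
        haJ.not_ge ((mem_powersetCard.mp hS).2 ▸ card_le_card hJS)
    rw [no_superset, card_empty, zero_mul, Nat.choose_eq_zero_of_lt haJ, mul_zero]

section ApproximateIndependentSampling

variable {ι 𝕜 : Type*} [Fintype ι] [DecidableEq ι] [Field 𝕜]

/-- The weights of approximate independent sampling: draw a uniform `a`-subset `S` of the block
`K`, keep each `i ∈ S` independently with probability `r i`, and add all indices outside `K`. -/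
def approximateIndependentSampling (K : Finset ι) (a : ℕ) (r : ι → 𝕜) (T : Finset ι) : 𝕜 :=
  ((#K).choose a : 𝕜)⁻¹ *
    ∑ S ∈ K.powersetCard a, independentSampling (conditionalMarginal K S r) T

lemma approximateIndependentSampling_eq_ite (K : Finset ι) (a : ℕ) (r : ι → 𝕜) (T : Finset ι) :
    approximateIndependentSampling K a r T =
      if ∀ i ∉ K, i ∈ T then
        ∑ S ∈ K.powersetCard a,
          if T ∩ K ⊆ S then
            ((#K).choose a : 𝕜)⁻¹ * ∏ i ∈ S, (if i ∈ T then r i else 1 - r i)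
          else 0
      else 0 := by
  have conditional {S : Finset ι} (hS : S ∈ K.powersetCard a) :=
    independentSampling_conditionalMarginal (mem_powersetCard.mp hS).1 r T
  rw [approximateIndependentSampling, sum_congr rfl fun S hS => conditional hS]
  by_cases hKT : ∀ i ∉ K, i ∈ T
  · simp only [if_pos hKT, and_iff_right hKT, mul_sum, mul_ite, mul_zero]
  · simp [hKT]

variable [CharZero 𝕜] {K : Finset ι} {a : ℕ}

lemma inclusionProb_approximateIndependentSampling (hak : a ≤ #K) (r : ι → 𝕜) (J : Finset ι) :
    inclusionProb (approximateIndependentSampling K a r) J =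
      a.choose #(J ∩ K) / (#K).choose #(J ∩ K) * ∏ i ∈ J ∩ K, r i := by
  have average : inclusionProb (approximateIndependentSampling K a r) J =
      ((#K).choose a : 𝕜)⁻¹ *
        ∑ S ∈ K.powersetCard a,
          inclusionProb (independentSampling (conditionalMarginal K S r)) J := by
    simp only [inclusionProb, approximateIndependentSampling, ← mul_sum]
    rw [sum_comm]
  have count : (#{S ∈ K.powersetCard a | J ∩ K ⊆ S} * (#K).choose #(J ∩ K) : 𝕜) =
      (#K).choose a * a.choose #(J ∩ K) :=
    mod_cast card_filter_superset_powersetCard_mul_choose inter_subset_right a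
  have choose_a_ne_zero : ((#K).choose a : 𝕜) ≠ 0 := mod_cast (Nat.choose_pos hak).ne'
  have choose_card_ne_zero : ((#K).choose #(J ∩ K) : 𝕜) ≠ 0 :=
    mod_cast (Nat.choose_pos (card_le_card inter_subset_right)).ne'
  simp only [average, inclusionProb_independentSampling, prod_conditionalMarginal, ← sum_filter,
    sum_const, nsmul_eq_mul]
  field_simp
  linear_combination (∏ i ∈ J ∩ K, r i) * count

variable {p : ι → 𝕜}

lemma inclusionProb_singleton_approximateIndependentSampling (ha : a ≠ 0) (hak : a ≤ #K)
    (hp : ∀ i ∉ K, p i = 1) (i : ι) :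
    inclusionProb (approximateIndependentSampling K a fun i => #K * p i / a) {i} = p i := by
  rw [inclusionProb_approximateIndependentSampling hak]
  by_cases hi : i ∈ K
  · have a_ne_zero : (a : 𝕜) ≠ 0 := mod_cast ha
    have card_ne_zero : (#K : 𝕜) ≠ 0 := mod_cast (card_pos.mpr ⟨i, hi⟩).ne'
    simp [hi]
    field_simp
  · simp [hi, hp i hi]

lemma inclusionProb_pair_approximateIndependentSampling (ha : a ≠ 0) (hak : a ≤ #K) {i j : ι}
    (hij : i ≠ j) (hi : i ∈ K) (hj : j ∈ K) :
    inclusionProb (approximateIndependentSampling K a fun i => #K * p i / a) {i, j} =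
      (a - 1) * #K / (a * (#K - 1)) * (p i * p j) := by
  have pair_subset : {i, j} ⊆ K := insert_subset hi (singleton_subset_iff.mpr hj)
  have a_ne_zero : (a : 𝕜) ≠ 0 := mod_cast ha
  have card_ne_zero : (#K : 𝕜) ≠ 0 := mod_cast (card_pos.mpr ⟨i, hi⟩).ne'
  have card_sub_one_ne_zero : (#K - 1 : 𝕜) ≠ 0 :=
    sub_ne_zero.mpr (mod_cast (one_lt_card.mpr ⟨i, hi, j, hj, hij⟩).ne')
  rw [inclusionProb_approximateIndependentSampling hak, inter_eq_left.mpr pair_subset,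
    card_pair hij, prod_pair hij, Nat.cast_choose_two, Nat.cast_choose_two]
  field_simp

lemma inclusionProb_pair_approximateIndependentSampling_of_notMem (ha : a ≠ 0) (hak : a ≤ #K)
    (hp : ∀ i ∉ K, p i = 1) {i j : ι} (hj : j ∉ K) :
    inclusionProb (approximateIndependentSampling K a fun i => #K * p i / a) {i, j} = p i := by
  rw [← inclusionProb_singleton_approximateIndependentSampling ha hak hp i,
    inclusionProb_approximateIndependentSampling hak,
    inclusionProb_approximateIndependentSampling hak, pair_comm, insert_inter_of_notMem hj]

lemma inclusionProb_pair_sub_mul_approximateIndependentSampling (ha : a ≠ 0) (hak : a ≤ #K)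
    (hp : ∀ i ∉ K, p i = 1) {i j : ι} (hij : i ≠ j) :
    inclusionProb (approximateIndependentSampling K a fun i => #K * p i / a) {i, j} - p i * p j =
      -((#K - a) / (a * (#K - 1)) *
        ((if i ∈ K then p i else 0) * (if j ∈ K then p j else 0))) := by
  by_cases hj : j ∈ K
  · by_cases hi : i ∈ K
    · have a_ne_zero : (a : 𝕜) ≠ 0 := mod_cast ha
      have card_sub_one_ne_zero : (#K - 1 : 𝕜) ≠ 0 :=
        sub_ne_zero.mpr (mod_cast (one_lt_card.mpr ⟨i, hi, j, hj, hij⟩).ne')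
      rw [inclusionProb_pair_approximateIndependentSampling ha hak hij hi hj, if_pos hi, if_pos hj]
      field_simp
      ring
    · rw [pair_comm, inclusionProb_pair_approximateIndependentSampling_of_notMem ha hak hp hi]
      simp [hi, hp i hi]
  · rw [inclusionProb_pair_approximateIndependentSampling_of_notMem ha hak hp hj]
    simp [hj, hp j hj]

lemma diagonal_sub_covariance_approximateIndependentSampling (ha : a ≠ 0) (hak : a ≤ #K)
    (hp : ∀ i ∉ K, p i = 1) {s : 𝕜} (hs : s = (#K - a) / (a * (#K - 1))) :
    Matrix.diagonal (fun i => p i * if i ∈ K then 1 - p i * (1 - s) else 0) -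
      (probabilityMatrix (approximateIndependentSampling K a fun i => #K * p i / a) -
        Matrix.of fun i j => p i * p j) =
    s • Matrix.vecMulVec (fun i => if i ∈ K then p i else 0)
      (fun i => if i ∈ K then p i else 0) := by
  ext i j
  simp only [Matrix.sub_apply, Matrix.of_apply, Matrix.smul_apply, Matrix.vecMulVec_apply,
    smul_eq_mul, probabilityMatrix]
  obtain rfl | hij := eq_or_ne i j
  · rw [Matrix.diagonal_apply_eq, pair_eq_singleton,
      inclusionProb_singleton_approximateIndependentSampling ha hak hp]
    split_ifs with hi
    · ring
    · simp [hp i hi]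
  · rw [Matrix.diagonal_apply_ne _ hij,
      inclusionProb_pair_sub_mul_approximateIndependentSampling ha hak hp hij, ← hs]
    ring

end ApproximateIndependentSampling

lemma approximateIndependentSampling_filter_val_lt {𝕜 : Type*} [Field 𝕜] {n k : ℕ} (hkn : k ≤ n)
    (a : ℕ) (r : Fin n → 𝕜) (T : Finset (Fin n)) :
    approximateIndependentSampling {i : Fin n | (i : ℕ) < k} a r T =
      if ∀ i : Fin n, k ≤ (i : ℕ) → i ∈ T then
        ∑ S : Finset (Fin n) with #S = a ∧ ∀ i : Fin n, i ∈ S → (i : ℕ) < k,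
          if T.filter (fun i : Fin n => (i : ℕ) < k) ⊆ S then
            (k.choose a : 𝕜)⁻¹ * ∏ i ∈ S, (if i ∈ T then r i else 1 - r i)
          else 0
      else 0 := by
  have powersetCard_eq : powersetCard a {i : Fin n | (i : ℕ) < k} =
      ({S | #S = a ∧ ∀ i ∈ S, (i : ℕ) < k} : Finset (Finset (Fin n))) := by
    ext S
    simp [mem_powersetCard, subset_iff, and_comm]
  simp [approximateIndependentSampling_eq_ite, powersetCard_eq, Fin.card_filter_val_lt, hkn,
    inter_filter]

theorem approximate_independent_sampling_marginals_and_eso_general {ι : Type*} [Fintype ι]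
    [DecidableEq ι] (K : Finset ι) (a : ℕ) (ha : 1 ≤ a) (hak : a ≤ #K) (p : ι → ℝ)
    (hp : ∀ i ∉ K, p i = 1) (P : Matrix ι ι ℝ)
    (hP : P = probabilityMatrix (approximateIndependentSampling K a fun i => #K * p i / a))
    (s : ℝ) (hs : s = (#K - a) / (a * (#K - 1)))
    (v : ι → ℝ) (hv : ∀ i, v i = if i ∈ K then 1 - p i * (1 - s) else 0) :
    (∀ i, P i i = p i) ∧
    (∀ i j, i ≠ j → i ∈ K → j ∈ K → P i j = (a - 1) * #K / (a * (#K - 1)) * (p i * p j)) ∧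
    (Matrix.diagonal (fun i => p i * v i) -
      (P - Matrix.of fun i j => p i * p j)).PosSemidef := by
  have ha0 : a ≠ 0 := Nat.one_le_iff_ne_zero.mp ha
  subst hP
  refine ⟨fun i => ?_, fun i j hij hi hj =>
    inclusionProb_pair_approximateIndependentSampling ha0 hak hij hi hj, ?_⟩
  · rw [probabilityMatrix, Matrix.of_apply, pair_eq_singleton,
      inclusionProb_singleton_approximateIndependentSampling ha0 hak hp]
  · have s_nonneg : 0 ≤ s := by
      have a_le_card : (a : ℝ) ≤ #K := mod_cast hak
      have one_le_card : (1 : ℝ) ≤ #K := mod_cast ha.trans hak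
      rw [hs]
      exact div_nonneg (sub_nonneg.mpr a_le_card)
        (mul_nonneg a.cast_nonneg (sub_nonneg.mpr one_le_card))
    simp only [hv, diagonal_sub_covariance_approximateIndependentSampling ha0 hak hp hs]
    exact (Matrix.posSemidef_vecMulVec_self_star _).smul s_nonneg

/-- Approximate independent sampling: first a uniformly random subset `S'` of the
first `k` indices of cardinality `a` is drawn, then each `i ∈ S'` is kept
independently with probability `k p i / a`, and all indices `i ≥ k` (those with
`p i = 1`) are added. Its marginals are `p i`, its off-diagonal pairwise
probabilities on the first `k` indices equal `((a-1)k/(a(k-1))) p i p j`, and the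
ESO condition holds with `v i = 1 - p i (1 - s)` for `i < k` (`s = (k-a)/(a(k-1))`)
and `v i = 0` for `i ≥ k`. -/
theorem approximate_independent_sampling_marginals_and_eso {n : ℕ} (k a : ℕ)
    (hk1 : 1 ≤ k) (hkn : k ≤ n) (ha1 : 1 ≤ a) (hak : a ≤ k)
    (p : Fin n → ℝ)
    (hpk : ∀ i : Fin n, (i : ℕ) < k → 0 < p i ∧ p i < 1)
    (hpn : ∀ i : Fin n, k ≤ (i : ℕ) → p i = 1)
    (hpa : ∀ i : Fin n, (i : ℕ) < k → (k : ℝ) * p i ≤ a)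
    (w : Finset (Fin n) → ℝ)
    (hw : ∀ T : Finset (Fin n),
      w T = if ∀ i : Fin n, k ≤ (i : ℕ) → i ∈ T then
        ∑ S' ∈ Finset.univ.filter
            (fun S' : Finset (Fin n) => S'.card = a ∧ ∀ i ∈ S', (i : ℕ) < k),
          (if T.filter (fun i : Fin n => (i : ℕ) < k) ⊆ S' then
            ((k.choose a : ℝ))⁻¹ *
              ∏ i ∈ S', (if i ∈ T then (k : ℝ) * p i / a else 1 - (k : ℝ) * p i / a)
          else 0)
      else 0)
    (P : Matrix (Fin n) (Fin n) ℝ)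
    (hP : ∀ i j, P i j =
      ∑ S ∈ Finset.univ.filter (fun S : Finset (Fin n) => i ∈ S ∧ j ∈ S), w S)
    (s : ℝ) (hs : s = ((k : ℝ) - a) / ((a : ℝ) * ((k : ℝ) - 1)))
    (v : Fin n → ℝ)
    (hv : ∀ i : Fin n, v i = if (i : ℕ) < k then 1 - p i * (1 - s) else 0) :
    (∀ i, P i i = p i) ∧
    (∀ i j : Fin n, i ≠ j → (i : ℕ) < k → (j : ℕ) < k →
      P i j = (((a : ℝ) - 1) * k / ((a : ℝ) * ((k : ℝ) - 1))) * (p i * p j)) ∧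
    (Matrix.diagonal (fun i => p i * v i) -
      (P - Matrix.of fun i j => p i * p j)).PosSemidef := by
  have card_block : #{i : Fin n | (i : ℕ) < k} = k := by
    rw [Fin.card_filter_val_lt, min_eq_right hkn]
  have hP_eq : P = probabilityMatrix (approximateIndependentSampling {i : Fin n | (i : ℕ) < k} a
      fun i => (k : ℝ) * p i / a) := by
    ext i j
    simp only [hP, hw, probabilityMatrix_apply, approximateIndependentSampling_filter_val_lt hkn]
  simpa [card_block] using approximate_independent_sampling_marginals_and_eso_general
    {i : Fin n | (i : ℕ) < k} a ha1 (by rwa [card_block]) p (by simpa using hpn) P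
    (by rw [card_block, hP_eq]) s (by rw [card_block, hs]) v (by simpa using hv)
end

section
/- Let 0 < L_1 ≤ L_2 ≤ ⋯ ≤ L_n be positive reals and let 0 < b ≤ n. Let k be the largest integer in [1,n] satisfying 0 < b + k − n ≤ (Σ_{i=1}^k L_i)/L_k (assume such k exists), and define p* ∈ R^n by p*_i = (b + k − n)·L_i / (Σ_{j=1}^k L_j) for i ≤ k and p*_i = 1 for i > k. Then for every p ∈ R^n with Σ_{i=1}^n p_i = b and 0 < p_i ≤ 1 for all i, and for every v ∈ R^n with v_i ≥ 1 − p_i for all i, one has Σ_{i=1}^n v_i L_i²/p_i ≥ Σ_{i=1}^n (1 − p*_i) L_i²/p*_i. Consequently, among all proper samplings of expected minibatch size b, the independent sampling with probabilities p* (for which the ESO condition holds with equality and v_i = 1 − p*_i) minimizes the quantity Σ_{i=1}^n v_i L_i²/p_i. -/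
open scoped BigOperators

/-!
The vector `p*` is the KKT point of the convex problem of minimizing `∑ (1 - p i) * L i ^ 2 / p i`
subject to `∑ p i = b` and `p i ≤ 1`. The constraint `∑ p i = b` has multiplier `T ^ 2`, where
`T = (∑ i < k, L i) / (b + k - n)`: the function `q ↦ (1 - q) * L i ^ 2 / q` has slope `-T ^ 2` at
`q = L i / T`, which is `p* i` for `i < k`, and slope `-L i ^ 2 ≤ -T ^ 2` at `q = 1`, which is
`p* i` for `i ≥ k`. The inequality `T ≤ L i` for `i ≥ k` comes from the failure of the condition on
`k` at `k + 1`. Hence the line of slope `-T ^ 2` through the point at `p* i` lies below the `i`-th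
summand on `(0, 1]`, and the linear terms cancel on summation because `∑ p i = ∑ p* i`.
-/

open Finset

lemma one_sub_mul_sq_div_le_add_mul_sub {L T p : ℝ} (hT : T ≠ 0) (hp : 0 < p) :
    (1 - L / T) * L ^ 2 / (L / T) ≤ (1 - p) * L ^ 2 / p + T ^ 2 * (p - L / T) := by
  have gap_eq : (1 - p) * L ^ 2 / p + T ^ 2 * (p - L / T) - (1 - L / T) * L ^ 2 / (L / T) =
      (L - T * p) ^ 2 / p := by
    field_simp
    ring
  exact sub_nonneg.1 (gap_eq ▸ by positivity)

lemma zero_le_one_sub_mul_sq_div_add_mul_sub_one {L T p : ℝ} (hTL : T ^ 2 ≤ L ^ 2) (hp : 0 < p)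
    (hp1 : p ≤ 1) : 0 ≤ (1 - p) * L ^ 2 / p + T ^ 2 * (p - 1) := by
  have hTp : T ^ 2 ≤ L ^ 2 / p := hTL.trans (le_div_self (sq_nonneg L) hp hp1)
  calc
    0 ≤ (1 - p) * (L ^ 2 / p - T ^ 2) := mul_nonneg (sub_nonneg.2 hp1) (sub_nonneg.2 hTp)
    _ = (1 - p) * L ^ 2 / p + T ^ 2 * (p - 1) := by ring

section KKT

variable {ι : Type*}

lemma sum_le_sum_of_le_add_mul_sub {R : Type*} [CommRing R] [PartialOrder R] [IsOrderedRing R]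
    {s : Finset ι} {f g p q : ι → R} {c : R} (hpq : ∑ i ∈ s, p i = ∑ i ∈ s, q i)
    (h : ∀ i ∈ s, f i ≤ g i + c * (p i - q i)) : ∑ i ∈ s, f i ≤ ∑ i ∈ s, g i :=
  calc
    ∑ i ∈ s, f i ≤ ∑ i ∈ s, (g i + c * (p i - q i)) := sum_le_sum h
    _ = ∑ i ∈ s, g i := by
      rw [sum_add_distrib, ← mul_sum, sum_sub_distrib, hpq, sub_self, mul_zero, add_zero]

lemma sum_one_sub_mul_sq_div_le_of_kkt {s : Finset ι} {L p q : ι → ℝ} {T : ℝ}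
    (hT : 0 < T) (hq : ∀ i ∈ s, q i = L i / T ∨ q i = 1 ∧ T ≤ L i)
    (hp : ∀ i ∈ s, 0 < p i ∧ p i ≤ 1) (hpq : ∑ i ∈ s, p i = ∑ i ∈ s, q i) :
    ∑ i ∈ s, (1 - q i) * L i ^ 2 / q i ≤ ∑ i ∈ s, (1 - p i) * L i ^ 2 / p i := by
  refine sum_le_sum_of_le_add_mul_sub (c := T ^ 2) hpq fun i hi => ?_
  obtain ⟨hp0, hp1⟩ := hp i hi
  rcases hq i hi with hqi | ⟨hqi, hTL⟩ <;> rw [hqi]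
  · exact one_sub_mul_sq_div_le_add_mul_sub hT.ne' hp0
  · simpa only [sub_self, zero_mul, zero_div] using
      zero_le_one_sub_mul_sq_div_add_mul_sub_one (pow_le_pow_left₀ hT.le hTL 2) hp0 hp1

variable [DecidableEq ι]

/-- The inclusion probabilities that spread the mass `c` over `s` proportionally to `L` and equal
`1` off `s`. The vector `p*` is the case `s = {1, …, k}`, `c = b + k - n`. Nothing in the definition
forces the entries on `s` to be at most `1`. -/
noncomputable def proportionalOrOne (L : ι → ℝ) (c : ℝ) (s : Finset ι) (i : ι) : ℝ :=
  if i ∈ s then c * L i / ∑ j ∈ s, L j else 1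

lemma proportionalOrOne_of_mem (L : ι → ℝ) (c : ℝ) {s : Finset ι} {i : ι} (hi : i ∈ s) :
    proportionalOrOne L c s i = c * L i / ∑ j ∈ s, L j :=
  if_pos hi

lemma proportionalOrOne_of_notMem (L : ι → ℝ) (c : ℝ) {s : Finset ι} {i : ι} (hi : i ∉ s) :
    proportionalOrOne L c s i = 1 :=
  if_neg hi

lemma sum_proportionalOrOne [Fintype ι] {L : ι → ℝ} {s : Finset ι} (c : ℝ)
    (hS : ∑ i ∈ s, L i ≠ 0) : ∑ i, proportionalOrOne L c s i = c + #sᶜ := by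
  have sum_mem : ∑ i ∈ s, proportionalOrOne L c s i = c := by
    rw [sum_congr rfl fun i hi => proportionalOrOne_of_mem L c hi, ← sum_div, ← mul_sum,
      mul_div_cancel_right₀ _ hS]
  have sum_compl : ∑ i ∈ sᶜ, proportionalOrOne L c s i = #sᶜ := by
    rw [sum_congr rfl fun i hi => proportionalOrOne_of_notMem L c (mem_compl.1 hi), sum_const,
      nsmul_one]
  rw [← sum_add_sum_compl s, sum_mem, sum_compl]

theorem independent_sampling_with_pstar_is_optimal_general [Fintype ι] {L : ι → ℝ}
    {s : Finset ι} (hL : ∀ i ∈ s, 0 < L i) {c : ℝ} (hc : 0 < c) (hs : s.Nonempty)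
    (hsL : ∀ i ∉ s, ∑ j ∈ s, L j ≤ c * L i) {p : ι → ℝ} (hpsum : ∑ i, p i = c + #sᶜ)
    (hp : ∀ i, 0 < p i ∧ p i ≤ 1) {v : ι → ℝ} (hv : ∀ i, 1 - p i ≤ v i) :
    ∑ i, (1 - proportionalOrOne L c s i) * L i ^ 2 / proportionalOrOne L c s i ≤
      ∑ i, v i * L i ^ 2 / p i := by
  have hS : 0 < ∑ j ∈ s, L j := sum_pos hL hs
  have kkt : ∀ i ∈ univ, proportionalOrOne L c s i = L i / ((∑ j ∈ s, L j) / c) ∨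
      proportionalOrOne L c s i = 1 ∧ (∑ j ∈ s, L j) / c ≤ L i := by
    intro i _
    by_cases hi : i ∈ s
    · exact .inl (by rw [proportionalOrOne_of_mem L c hi, div_div_eq_mul_div, mul_comm])
    · exact .inr ⟨proportionalOrOne_of_notMem L c hi, (div_le_iff₀' hc).2 (hsL i hi)⟩
  calc
    _ ≤ ∑ i, (1 - p i) * L i ^ 2 / p i :=
      sum_one_sub_mul_sq_div_le_of_kkt (div_pos hS hc) kkt (fun i _ => hp i)
        (hpsum.trans (sum_proportionalOrOne c hS.ne').symm)
    _ ≤ ∑ i, v i * L i ^ 2 / p i := by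
      gcongr with i
      · exact (hp i).1.le
      · exact hv i

end KKT

section InitialSegment

variable {n k : ℕ}

lemma card_compl_filter_val_lt : #({i | i.val < k} : Finset (Fin n))ᶜ = n - k := by
  rw [card_compl, Fin.card_filter_val_lt, Fintype.card_fin]
  omega

lemma sum_filter_val_lt_succ {M : Type*} [AddCommMonoid M] (f : Fin n → M) (hk : k < n) :
    ∑ i ∈ {i : Fin n | i.val < k + 1}, f i =
      f ⟨k, hk⟩ + ∑ i ∈ {i : Fin n | i.val < k}, f i := by
  have filter_succ : ({i | i.val < k + 1} : Finset (Fin n)) =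
      insert ⟨k, hk⟩ ({i | i.val < k} : Finset (Fin n)) := by
    ext i
    simp only [mem_filter, mem_univ, true_and, mem_insert, Fin.ext_iff]
    omega
  rw [filter_succ, sum_insert (by simp)]

lemma sum_filter_val_lt_le_mul {L : Fin n → ℝ} (hL : ∀ i, 0 < L i) (hmono : Monotone L)
    {c : ℝ} (hc : 0 ≤ c)
    (hsucc : ∀ hk : k < n, (∑ i ∈ {i : Fin n | i.val < k + 1}, L i) / L ⟨k, hk⟩ < c + 1)
    {i : Fin n} (hi : k ≤ i) : ∑ j ∈ {j : Fin n | j.val < k}, L j ≤ c * L i := by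
  have hk : k < n := hi.trans_lt i.isLt
  have hlt := hsucc hk
  rw [sum_filter_val_lt_succ L hk, div_lt_iff₀ (hL _)] at hlt
  calc
    ∑ j ∈ {j : Fin n | j.val < k}, L j ≤ c * L ⟨k, hk⟩ := by linarith
    _ ≤ c * L i := mul_le_mul_of_nonneg_left (hmono hi) hc

end InitialSegment

/-- Optimality of the independent sampling with probabilities `p*`: for any
feasible probability vector `p` and any ESO-admissible `v` (which necessarily
satisfies `v i ≥ 1 - p i`), the quantity `Σ v i L i ^ 2 / p i` is at least its
value for the independent sampling with probabilities `p*`, where `v i = 1 - p* i`. -/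
theorem independent_sampling_with_pstar_is_optimal {n : ℕ} (hn : 0 < n)
    (L : Fin n → ℝ) (hLpos : ∀ i, 0 < L i) (hLmono : Monotone L)
    (b : ℝ) (hb0 : 0 < b) (hbn : b ≤ n)
    (k : ℕ) (hk1 : 1 ≤ k) (hkn : k ≤ n)
    (hkcond : 0 < b + k - n ∧
      b + k - n ≤ (∑ i ∈ Finset.univ.filter (fun i : Fin n => (i : ℕ) < k), L i) /
        L ⟨k - 1, by omega⟩)
    (hkmax : ∀ k' : ℕ, ∀ _hk' : k < k', ∀ _hk'n : k' ≤ n,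
      ¬ (0 < b + k' - n ∧
        b + k' - n ≤ (∑ i ∈ Finset.univ.filter (fun i : Fin n => (i : ℕ) < k'), L i) /
          L ⟨k' - 1, by omega⟩))
    (pstar : Fin n → ℝ)
    (hpstar : ∀ i : Fin n, pstar i =
      if (i : ℕ) < k then
        (b + k - n) * L i / (∑ j ∈ Finset.univ.filter (fun j : Fin n => (j : ℕ) < k), L j)
      else 1) :
    ∀ p : Fin n → ℝ, (∑ i, p i = b) → (∀ i, 0 < p i ∧ p i ≤ 1) →
      ∀ v : Fin n → ℝ, (∀ i, 1 - p i ≤ v i) →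
        ∑ i, (1 - pstar i) * L i ^ 2 / pstar i ≤ ∑ i, v i * L i ^ 2 / p i := by
  intro p hpsum hp v hv
  obtain ⟨hc, -⟩ := hkcond
  have hpstar_eq : pstar = proportionalOrOne L (b + k - n) {i | i.val < k} := by
    ext i
    simp only [hpstar i, proportionalOrOne, mem_filter, mem_univ, true_and]
  have hsucc (hk : k < n) :
      (∑ i ∈ {i : Fin n | i.val < k + 1}, L i) / L ⟨k, hk⟩ < b + k - n + 1 := by
    have hcast : b + (k + 1 : ℕ) - n = b + k - n + 1 := by push_cast; ring
    exact not_le.1 fun hle => hkmax (k + 1) k.lt_succ_self hk ⟨by linarith, hcast.trans_le hle⟩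
  have hmass : ∑ i, p i = b + k - n + #({i | i.val < k} : Finset (Fin n))ᶜ := by
    rw [hpsum, card_compl_filter_val_lt, Nat.cast_sub hkn]
    ring
  rw [hpstar_eq]
  exact independent_sampling_with_pstar_is_optimal_general (fun i _ => hLpos i) hc
    ⟨⟨0, hn⟩, mem_filter.2 ⟨mem_univ _, hk1⟩⟩
    (fun i hi => sum_filter_val_lt_le_mul hLpos hLmono hc.le hsucc (by simpa using hi)) hmass hp hv
end

section
/- Let each f_i : R^d → R be convex and differentiable with L_i-Lipschitz gradient, let f = (1/n) Σ_{i=1}^n f_i be μ-strongly convex with μ > 0, let L̄ = (1/n) Σ_{i=1}^n L_i, and set the importance sampling probabilities p_i = L_i/(Σ_{j=1}^n L_j). Fix x, u ∈ R^d and a step size 0 < η < 2/L̄, set x' = x − η u, draw a single random index i ∈ [n] with Prob(i = j) = p_j, and define the SARAH update u' := u + (1/(n p_i))(∇f_i(x') − ∇f_i(x)). Then E‖u'‖² ≤ [ 1 − (2/(η L̄) − 1)·μ²η² ]·‖u‖², where the expectation is over the random index i. -/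
/-!
Write `gᵢ = ∇fᵢ(x') - ∇fᵢ(x)`, let `G` be the average of the `gᵢ`, and let `X = (n pᵢ)⁻¹ gᵢ`,
which has mean `G`. Since `n pᵢ = Lᵢ / L̄`, the Baillon–Haddad inequality
`‖gᵢ‖² ≤ Lᵢ ⟪gᵢ, x' - x⟫` averages to `E‖X‖² ≤ L̄ ⟪G, x' - x⟫ = -η L̄ ⟪G, u⟫`. Hence
`E‖u + X‖² = ‖u‖² + 2 ⟪u, G⟫ + E‖X‖² ≤ ‖u‖² - (2 / (η L̄) - 1) E‖X‖²`.
Finally `E‖X‖² ≥ ‖G‖²` by Jensen, and `‖G‖ ≥ μ ‖x' - x‖ = μ η ‖u‖` by strong convexity.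
-/

open scoped BigOperators

open scoped RealInnerProductSpace

lemma one_le_two_div_mul {η L : ℝ} (hη0 : 0 < η) (hη : η ≤ 2 / L) : 1 ≤ 2 / (η * L) := by
  have hL : 0 < L := (div_pos_iff_of_pos_left two_pos).1 (hη0.trans_le hη)
  rwa [one_le_div (by positivity), ← le_div_iff₀ hL]

section Convex

variable {E : Type*} [NormedAddCommGroup E]

lemma convexOn_add_fderiv_le [NormedSpace ℝ E] {s : Set E} {f : E → ℝ} (hf : ConvexOn ℝ s f)
    {x y : E} (hx : x ∈ s) (hy : y ∈ s) {f' : E →L[ℝ] ℝ} (hf' : HasFDerivAt f f' x) :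
    f x + f' (y - x) ≤ f y := by
  have hline : HasDerivAt (f ∘ AffineMap.lineMap (k := ℝ) x y) (f' (y - x)) 0 :=
    HasFDerivAt.comp_hasDerivAt 0 (by simpa using hf') AffineMap.hasDerivAt_lineMap
  have hslope := (hf.comp_affineMap (AffineMap.lineMap (k := ℝ) x y)).le_slope_of_hasDerivAt
    (by simpa using hx) (by simpa using hy) one_pos hline
  simp only [slope_def_field, Function.comp_apply, AffineMap.lineMap_apply_one,
    AffineMap.lineMap_apply_zero, sub_zero, div_one] at hslope
  linarith

lemma le_add_fderiv_add_sq_of_lipschitz_fderiv [NormedSpace ℝ E] {f : E → ℝ}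
    (hf : Differentiable ℝ f) {L : ℝ} {x : E}
    (hlip : ∀ z, ‖fderiv ℝ f z - fderiv ℝ f x‖ ≤ L * ‖z - x‖) (y : E) :
    f y ≤ f x + fderiv ℝ f x (y - x) + L / 2 * ‖y - x‖ ^ 2 := by
  let γ : ℝ → E := AffineMap.lineMap x y
  let B : ℝ → ℝ := fun t => f x + t * fderiv ℝ f x (y - x) + t ^ 2 * (L / 2 * ‖y - x‖ ^ 2)
  have hγ (t : ℝ) : HasDerivAt (f ∘ γ) (fderiv ℝ f (γ t) (y - x)) t :=
    (hf (γ t)).hasFDerivAt.comp_hasDerivAt t AffineMap.hasDerivAt_lineMap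
  have hB (t : ℝ) :
      HasDerivAt B (fderiv ℝ f x (y - x) + 2 * t * (L / 2 * ‖y - x‖ ^ 2)) t :=
    ((((hasDerivAt_id t).mul_const _).const_add (f x)).add
      ((hasDerivAt_pow 2 t).mul_const _)).congr_deriv (by simp)
  have hderiv (t : ℝ) (ht : t ∈ Set.Ico (0 : ℝ) 1) :
      fderiv ℝ f (γ t) (y - x) ≤ fderiv ℝ f x (y - x) + 2 * t * (L / 2 * ‖y - x‖ ^ 2) := by
    have hdist : ‖γ t - x‖ = t * ‖y - x‖ := by
      simp [γ, AffineMap.lineMap_apply, norm_smul, abs_of_nonneg ht.1]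
    calc fderiv ℝ f (γ t) (y - x)
        = fderiv ℝ f x (y - x) + (fderiv ℝ f (γ t) - fderiv ℝ f x) (y - x) := by simp
      _ ≤ fderiv ℝ f x (y - x) + ‖fderiv ℝ f (γ t) - fderiv ℝ f x‖ * ‖y - x‖ := by
          gcongr
          exact (Real.le_norm_self _).trans (ContinuousLinearMap.le_opNorm _ _)
      _ ≤ fderiv ℝ f x (y - x) + L * ‖γ t - x‖ * ‖y - x‖ := by gcongr; exact hlip (γ t)
      _ = fderiv ℝ f x (y - x) + 2 * t * (L / 2 * ‖y - x‖ ^ 2) := by rw [hdist]; ring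
  have hle := image_le_of_deriv_right_le_deriv_boundary
    (fun t _ => (hγ t).continuousAt.continuousWithinAt) (fun t _ => (hγ t).hasDerivWithinAt)
    (by simp [γ, B]) (fun t _ => (hB t).continuousAt.continuousWithinAt)
    (fun t _ => (hB t).hasDerivWithinAt) hderiv (Set.right_mem_Icc.2 zero_le_one)
  simpa [γ, B] using hle

variable [InnerProductSpace ℝ E]

lemma strongConvexOn_add_fderiv_add_sq_le {s : Set E} {m : ℝ} {f : E → ℝ}
    (hf : StrongConvexOn s m f) {x y : E} (hx : x ∈ s) (hy : y ∈ s) {f' : E →L[ℝ] ℝ}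
    (hf' : HasFDerivAt f f' x) :
    f x + f' (y - x) + m / 2 * ‖y - x‖ ^ 2 ≤ f y := by
  have htangent := convexOn_add_fderiv_le (strongConvexOn_iff_convex.1 hf) hx hy
    (hf'.sub ((hasStrictFDerivAt_norm_sq x).hasFDerivAt.const_mul (m / 2)))
  simp only [sub_apply, smul_apply, innerSL_apply_apply, smul_eq_mul, nsmul_eq_mul,
    inner_sub_right, real_inner_self_eq_norm_sq, Nat.cast_ofNat] at htangent
  rw [norm_sub_sq_real, real_inner_comm]
  linarith

lemma strongConvexOn_mul_norm_sub_le_norm_fderiv_sub {s : Set E} {m : ℝ} {f : E → ℝ}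
    (hf : StrongConvexOn s m f) {x y : E} (hx : x ∈ s) (hy : y ∈ s) {f'x f'y : E →L[ℝ] ℝ}
    (hf'x : HasFDerivAt f f'x x) (hf'y : HasFDerivAt f f'y y) :
    m * ‖y - x‖ ≤ ‖f'y - f'x‖ := by
  obtain rfl | hne := eq_or_ne y x
  · simp
  have hxy := strongConvexOn_add_fderiv_add_sq_le hf hx hy hf'x
  have hyx := strongConvexOn_add_fderiv_add_sq_le hf hy hx hf'y
  rw [norm_sub_rev, ← neg_sub y x, map_neg] at hyx
  have hmono : m * ‖y - x‖ ^ 2 ≤ (f'y - f'x) (y - x) := by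
    rw [sub_apply]; linarith
  have hop : (f'y - f'x) (y - x) ≤ ‖f'y - f'x‖ * ‖y - x‖ :=
    (Real.le_norm_self _).trans (ContinuousLinearMap.le_opNorm _ _)
  refine le_of_mul_le_mul_right ?_ (norm_pos_iff.2 (sub_ne_zero.2 hne))
  linarith

end Convex

section Gradient

variable {E : Type*} [NormedAddCommGroup E] [InnerProductSpace ℝ E] [CompleteSpace E]

lemma norm_gradient_sub_gradient (f : E → ℝ) (x y : E) :
    ‖gradient f x - gradient f y‖ = ‖fderiv ℝ f x - fderiv ℝ f y‖ := by
  simp only [gradient, ← map_sub, LinearIsometryEquiv.norm_map]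

lemma strongConvexOn_mul_norm_sub_le_norm_gradient_sub {s : Set E} {m : ℝ} {f : E → ℝ}
    (hf : StrongConvexOn s m f) {x y : E} (hx : x ∈ s) (hy : y ∈ s)
    (hfx : DifferentiableAt ℝ f x) (hfy : DifferentiableAt ℝ f y) :
    m * ‖y - x‖ ≤ ‖gradient f y - gradient f x‖ :=
  norm_gradient_sub_gradient f y x ▸
    strongConvexOn_mul_norm_sub_le_norm_fderiv_sub hf hx hy hfx.hasFDerivAt hfy.hasFDerivAt

lemma gradient_const_mul_sum {ι : Type*} [Fintype ι] (c : ℝ) {f : ι → E → ℝ} {x : E}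
    (hf : ∀ i, DifferentiableAt ℝ (f i) x) :
    gradient (fun y => c * ∑ i, f i y) x = c • ∑ i, gradient (f i) x := by
  have hderiv : HasFDerivAt (fun y => c * ∑ i, f i y) (c • ∑ i, fderiv ℝ (f i) x) x :=
    (HasFDerivAt.fun_sum fun i _ => (hf i).hasFDerivAt).const_mul c
  simp only [gradient, hderiv.fderiv, map_smul, map_sum]

variable {f : E → ℝ} {L : ℝ}

lemma add_inner_gradient_add_sq_le (hconv : ConvexOn ℝ Set.univ f) (hdiff : Differentiable ℝ f)
    (hL : 0 < L) (hlip : ∀ x y, ‖gradient f x - gradient f y‖ ≤ L * ‖x - y‖) (x y : E) :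
    f x + ⟪gradient f x, y - x⟫ + ‖gradient f y - gradient f x‖ ^ 2 / (2 * L) ≤ f y := by
  set g := gradient f y - gradient f x with hg
  -- The gap between the tangent plane at `x` and the quadratic majorant at `y` is smallest at `z`.
  set z := y - L⁻¹ • g with hz
  have hlower : f x + fderiv ℝ f x (z - x) ≤ f z :=
    convexOn_add_fderiv_le hconv (Set.mem_univ x) (Set.mem_univ z) (hdiff x).hasFDerivAt
  have hupper : f z ≤ f y + fderiv ℝ f y (z - y) + L / 2 * ‖z - y‖ ^ 2 :=
    le_add_fderiv_add_sq_of_lipschitz_fderiv hdiff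
      (fun w => norm_gradient_sub_gradient f w y ▸ hlip w y) z
  have hzx : ⟪gradient f x, z - x⟫ = ⟪gradient f x, y - x⟫ - L⁻¹ * ⟪gradient f x, g⟫ := by
    rw [hz, sub_right_comm, inner_sub_right, real_inner_smul_right]
  have hzy : ⟪gradient f y, z - y⟫ = -(L⁻¹ * ⟪gradient f y, g⟫) := by
    rw [hz, sub_sub_cancel_left, inner_neg_right, real_inner_smul_right]
  have hnorm : L / 2 * ‖z - y‖ ^ 2 = ‖g‖ ^ 2 / (2 * L) := by
    rw [hz, sub_sub_cancel_left, norm_neg, norm_smul, mul_pow, Real.norm_eq_abs, sq_abs]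
    field_simp
  have hgg : L⁻¹ * ⟪gradient f y, g⟫ - L⁻¹ * ⟪gradient f x, g⟫ = 2 * (‖g‖ ^ 2 / (2 * L)) := by
    rw [← mul_sub, ← inner_sub_left, ← hg, real_inner_self_eq_norm_sq]
    field_simp
  rw [← inner_gradient_left, hzx] at hlower
  rw [← inner_gradient_left, hzy, hnorm] at hupper
  linarith

lemma norm_gradient_sub_sq_le_mul_inner (hconv : ConvexOn ℝ Set.univ f)
    (hdiff : Differentiable ℝ f) (hL : 0 < L)
    (hlip : ∀ x y, ‖gradient f x - gradient f y‖ ≤ L * ‖x - y‖) (x y : E) :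
    ‖gradient f y - gradient f x‖ ^ 2 ≤ L * ⟪gradient f y - gradient f x, y - x⟫ := by
  have hxy := add_inner_gradient_add_sq_le hconv hdiff hL hlip x y
  have hyx := add_inner_gradient_add_sq_le hconv hdiff hL hlip y x
  rw [norm_sub_rev, ← neg_sub y x, inner_neg_right] at hyx
  rw [← div_le_iff₀' hL, inner_sub_left]
  have hhalf : ‖gradient f y - gradient f x‖ ^ 2 / L
      = 2 * (‖gradient f y - gradient f x‖ ^ 2 / (2 * L)) := by field_simp
  linarith

end Gradient

section WeightedSum

variable {ι E : Type*} [Fintype ι] {w : ι → ℝ} [NormedAddCommGroup E]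

lemma norm_sum_smul_sq_le [NormedSpace ℝ E] (hw : ∀ i, 0 ≤ w i) (hsum : ∑ i, w i = 1)
    (X : ι → E) : ‖∑ i, w i • X i‖ ^ 2 ≤ ∑ i, w i * ‖X i‖ ^ 2 :=
  (convexOn_univ_norm.pow (fun _ _ => norm_nonneg _) 2).map_sum_le (fun i _ => hw i) hsum
    fun _ _ => Set.mem_univ _

lemma sum_mul_norm_add_sq [InnerProductSpace ℝ E] (hsum : ∑ i, w i = 1) (u : E) (X : ι → E) :
    ∑ i, w i * ‖u + X i‖ ^ 2
      = ‖u‖ ^ 2 + 2 * ⟪u, ∑ i, w i • X i⟫ + ∑ i, w i * ‖X i‖ ^ 2 := by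
  simp only [norm_add_sq_real, mul_add, Finset.sum_add_distrib, ← Finset.sum_mul, hsum, one_mul,
    inner_sum, real_inner_smul_right, Finset.mul_sum, mul_left_comm]

end WeightedSum

section ImportanceSampling

variable {ι E : Type*} [Fintype ι] [NormedAddCommGroup E]

/-- The importance sampling probabilities `pᵢ = Lᵢ / ∑ⱼ Lⱼ`. -/
noncomputable def importanceProb (L : ι → ℝ) (i : ι) : ℝ := L i / ∑ j, L j

/-- The importance sampling estimator `(n pᵢ)⁻¹ gᵢ` of the average of the vectors `gᵢ`, as a
function of the sampled index `i`; here `n` is the number of indices. -/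
noncomputable def importanceEstimate [NormedSpace ℝ E] (L : ι → ℝ) (g : ι → E) (i : ι) : E :=
  ((Fintype.card ι : ℝ) * importanceProb L i)⁻¹ • g i

variable {L : ι → ℝ}

lemma importanceProb_pos (hL : ∀ i, 0 < L i) (i : ι) : 0 < importanceProb L i :=
  div_pos (hL i) (Finset.sum_pos (fun j _ => hL j) ⟨i, Finset.mem_univ i⟩)

lemma sum_importanceProb [Nonempty ι] (hL : ∀ i, 0 < L i) : ∑ i, importanceProb L i = 1 := by
  have hsum : 0 < ∑ i, L i := Finset.sum_pos (fun i _ => hL i) Finset.univ_nonempty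
  simp only [importanceProb, ← Finset.sum_div, div_self hsum.ne']

lemma sum_importanceProb_smul_importanceEstimate [NormedSpace ℝ E] (hL : ∀ i, 0 < L i)
    (g : ι → E) :
    ∑ i, importanceProb L i • importanceEstimate L g i = (Fintype.card ι : ℝ)⁻¹ • ∑ i, g i := by
  rw [Finset.smul_sum]
  refine Finset.sum_congr rfl fun i _ => ?_
  rw [importanceEstimate, smul_smul, mul_inv_rev,
    mul_inv_cancel_left₀ (importanceProb_pos hL i).ne']

variable [InnerProductSpace ℝ E] {g : ι → E}

lemma sum_importanceProb_mul_norm_importanceEstimate_sq_le (hL : ∀ i, 0 < L i) {v : E}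
    (hg : ∀ i, ‖g i‖ ^ 2 ≤ L i * ⟪g i, v⟫) :
    ∑ i, importanceProb L i * ‖importanceEstimate L g i‖ ^ 2
      ≤ ((Fintype.card ι : ℝ)⁻¹ * ∑ i, L i) * ⟪(Fintype.card ι : ℝ)⁻¹ • ∑ i, g i, v⟫ := by
  set n := (Fintype.card ι : ℝ) with hn
  have hterm (i : ι) : importanceProb L i * ‖importanceEstimate L g i‖ ^ 2
      ≤ (n⁻¹ * ∑ j, L j) * (n⁻¹ * ⟪g i, v⟫) := by
    have hLi : 0 < L i := hL i
    have hsum : 0 < ∑ j, L j := Finset.sum_pos (fun j _ => hL j) ⟨i, Finset.mem_univ i⟩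
    calc importanceProb L i * ‖importanceEstimate L g i‖ ^ 2
        = (n⁻¹ * ∑ j, L j) * (n⁻¹ * (‖g i‖ ^ 2 / L i)) := by
          rw [importanceEstimate, importanceProb, ← hn, norm_smul, mul_pow, Real.norm_eq_abs,
            sq_abs]
          field_simp
      _ ≤ (n⁻¹ * ∑ j, L j) * (n⁻¹ * ⟪g i, v⟫) := by
          gcongr
          exact (div_le_iff₀' hLi).2 (hg i)
  refine (Finset.sum_le_sum fun i _ => hterm i).trans_eq ?_
  rw [real_inner_smul_left, sum_inner, ← Finset.mul_sum, ← Finset.mul_sum]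

theorem sum_importanceProb_mul_norm_add_importanceEstimate_sq_le [Nonempty ι]
    (hL : ∀ i, 0 < L i) {u : E} {η Lbar : ℝ} (hη0 : 0 < η) (hη : η ≤ 2 / Lbar)
    (hLbar : Lbar = (Fintype.card ι : ℝ)⁻¹ * ∑ i, L i)
    (hg : ∀ i, ‖g i‖ ^ 2 ≤ L i * ⟪g i, -(η • u)⟫) :
    ∑ i, importanceProb L i * ‖u + importanceEstimate L g i‖ ^ 2
      ≤ ‖u‖ ^ 2 - (2 / (η * Lbar) - 1) * ‖(Fintype.card ι : ℝ)⁻¹ • ∑ i, g i‖ ^ 2 := by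
  set G := (Fintype.card ι : ℝ)⁻¹ • ∑ i, g i
  set V := ∑ i, importanceProb L i * ‖importanceEstimate L g i‖ ^ 2
  have hLbar_pos : 0 < Lbar := (div_pos_iff_of_pos_left two_pos).1 (hη0.trans_le hη)
  have hmean : ∑ i, importanceProb L i • importanceEstimate L g i = G :=
    sum_importanceProb_smul_importanceEstimate hL g
  have hvar : ‖G‖ ^ 2 ≤ V :=
    hmean ▸ norm_sum_smul_sq_le (fun i => (importanceProb_pos hL i).le) (sum_importanceProb hL) _
  have hinner : 2 * ⟪u, G⟫ ≤ -(2 / (η * Lbar)) * V := by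
    have hV : V ≤ Lbar * ⟪G, -(η • u)⟫ :=
      hLbar ▸ sum_importanceProb_mul_norm_importanceEstimate_sq_le hL hg
    rw [inner_neg_right, real_inner_smul_right, real_inner_comm] at hV
    calc 2 * ⟪u, G⟫ = -(2 / (η * Lbar)) * (Lbar * -(η * ⟪u, G⟫)) := by field_simp
      _ ≤ -(2 / (η * Lbar)) * V := mul_le_mul_of_nonpos_left hV (neg_nonpos.2 (by positivity))
  have hcoeff : 0 ≤ 2 / (η * Lbar) - 1 := sub_nonneg.2 (one_le_two_div_mul hη0 hη)
  calc ∑ i, importanceProb L i * ‖u + importanceEstimate L g i‖ ^ 2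
      = ‖u‖ ^ 2 + 2 * ⟪u, G⟫ + V := by rw [sum_mul_norm_add_sq (sum_importanceProb hL), hmean]
    _ ≤ ‖u‖ ^ 2 - (2 / (η * Lbar) - 1) * V := by linarith
    _ ≤ ‖u‖ ^ 2 - (2 / (η * Lbar) - 1) * ‖G‖ ^ 2 := by gcongr

end ImportanceSampling

theorem sarah_importance_sampling_step_strongly_convex_average_general
    {ι E : Type*} [Fintype ι] [Nonempty ι] [NormedAddCommGroup E] [InnerProductSpace ℝ E]
    [CompleteSpace E] {f : ι → E → ℝ} {L : ι → ℝ} (hL : ∀ i, 0 < L i)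
    (hconv : ∀ i, ConvexOn ℝ Set.univ (f i)) (hdiff : ∀ i, Differentiable ℝ (f i))
    (hlip : ∀ i x y, ‖gradient (f i) x - gradient (f i) y‖ ≤ L i * ‖x - y‖)
    {F : E → ℝ} (hF : F = fun y => (Fintype.card ι : ℝ)⁻¹ * ∑ i, f i y)
    {Lbar : ℝ} (hLbar : Lbar = (Fintype.card ι : ℝ)⁻¹ * ∑ i, L i)
    {p : ι → ℝ} (hp : ∀ i, p i = L i / ∑ j, L j)
    {x u x' : E} {η : ℝ} (hη0 : 0 < η) (hη : η < 2 / Lbar) (hx' : x' = x - η • u)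
    {μ : ℝ} (hμ : 0 ≤ μ) (hgrad : μ * ‖x' - x‖ ≤ ‖gradient F x' - gradient F x‖) :
    ∑ i, p i *
        ‖u + ((Fintype.card ι : ℝ) * p i)⁻¹ • (gradient (f i) x' - gradient (f i) x)‖ ^ 2
      ≤ (1 - (2 / (η * Lbar) - 1) * μ ^ 2 * η ^ 2) * ‖u‖ ^ 2 := by
  obtain rfl : p = importanceProb L := funext hp
  let g (i : ι) : E := gradient (f i) x' - gradient (f i) x
  have hstep : x' - x = -(η • u) := by rw [hx', sub_sub_cancel_left]
  have hcocoercive (i : ι) : ‖g i‖ ^ 2 ≤ L i * ⟪g i, -(η • u)⟫ :=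
    hstep ▸ norm_gradient_sub_sq_le_mul_inner (hconv i) (hdiff i) (hL i) (hlip i) x x'
  have hmean : gradient F x' - gradient F x = (Fintype.card ι : ℝ)⁻¹ • ∑ i, g i := by
    rw [hF, gradient_const_mul_sum _ fun i => hdiff i x',
      gradient_const_mul_sum _ fun i => hdiff i x, ← smul_sub, ← Finset.sum_sub_distrib]
  have hnorm : μ * (η * ‖u‖) ≤ ‖(Fintype.card ι : ℝ)⁻¹ • ∑ i, g i‖ := by
    rwa [hmean, hstep, norm_neg, norm_smul, Real.norm_of_nonneg hη0.le] at hgrad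
  have hcoeff : 0 ≤ 2 / (η * Lbar) - 1 := sub_nonneg.2 (one_le_two_div_mul hη0 hη.le)
  calc ∑ i, importanceProb L i * ‖u + importanceEstimate L g i‖ ^ 2
      ≤ ‖u‖ ^ 2 - (2 / (η * Lbar) - 1) * ‖(Fintype.card ι : ℝ)⁻¹ • ∑ i, g i‖ ^ 2 :=
        sum_importanceProb_mul_norm_add_importanceEstimate_sq_le hL hη0 hη.le hLbar hcocoercive
    _ ≤ ‖u‖ ^ 2 - (2 / (η * Lbar) - 1) * (μ * (η * ‖u‖)) ^ 2 := by gcongr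
    _ = (1 - (2 / (η * Lbar) - 1) * μ ^ 2 * η ^ 2) * ‖u‖ ^ 2 := by ring

/-- Linear decrease of the SARAH estimator norm with importance sampling when the
average `f` is `μ`-strongly convex: `E‖u'‖² ≤ (1 - (2/(η L̄) - 1) μ² η²) ‖u‖²`. -/
theorem sarah_importance_sampling_step_strongly_convex_average {n d : ℕ} (hn : 0 < n)
    (f : Fin n → EuclideanSpace ℝ (Fin d) → ℝ)
    (L : Fin n → ℝ) (hL : ∀ i, 0 < L i)
    (hconv : ∀ i, ConvexOn ℝ Set.univ (f i))
    (hdiff : ∀ i, Differentiable ℝ (f i))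
    (hlip : ∀ i x y, ‖gradient (f i) x - gradient (f i) y‖ ≤ L i * ‖x - y‖)
    (F : EuclideanSpace ℝ (Fin d) → ℝ)
    (hF : F = fun y => (n : ℝ)⁻¹ * ∑ i, f i y)
    (μ : ℝ) (hμ : 0 < μ) (hsc : StrongConvexOn Set.univ μ F)
    (Lbar : ℝ) (hLbar : Lbar = (n : ℝ)⁻¹ * ∑ i, L i)
    (p : Fin n → ℝ) (hp : ∀ i, p i = L i / ∑ j, L j)
    (x u : EuclideanSpace ℝ (Fin d))
    (η : ℝ) (hη0 : 0 < η) (hη : η < 2 / Lbar)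
    (x' : EuclideanSpace ℝ (Fin d)) (hx' : x' = x - η • u) :
    ∑ i, p i *
        ‖u + ((n : ℝ) * p i)⁻¹ • (gradient (f i) x' - gradient (f i) x)‖ ^ 2
      ≤ (1 - (2 / (η * Lbar) - 1) * μ ^ 2 * η ^ 2) * ‖u‖ ^ 2 := by
  have : NeZero n := ⟨hn.ne'⟩
  have hdiffF : Differentiable ℝ F := by rw [hF]; fun_prop
  simpa only [Fintype.card_fin] using
    sarah_importance_sampling_step_strongly_convex_average_general hL hconv hdiff hlip
      (by simpa using hF) (by simpa using hLbar) hp hη0 hη hx' hμ.le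
      (strongConvexOn_mul_norm_sub_le_norm_gradient_sub hsc (Set.mem_univ x) (Set.mem_univ x')
        (hdiffF x) (hdiffF x'))
end
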